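/- Let H = H_0 ∪ H_1 be a Horton set with at least 4 points, and let Δ be an empty triangle of H having vertices in both H_0 and H_1. Let (p_i, p_j) be the edge of Δ whose two endpoints both lie in H_0 or both lie in H_1. Then (p_i, p_j) is a visible edge of H (visible from above if p_i, p_j ∈ H_0, visible from below if p_i, p_j ∈ H_1). -/

import Mathlib

open scoped Classical

noncomputable section

/-- Euclidean distance between two points of the plane `ℝ × ℝ`. -/
def elen (p q : ℝ × ℝ) : ℝ := Real.sqrt ((p.1 - q.1) ^ 2 + (p.2 - q.2) ^ 2)

/-- Orientation determinant of an ordered triple of points. -/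
def orient (a b c : ℝ × ℝ) : ℝ :=
  (b.1 - a.1) * (c.2 - a.2) - (b.2 - a.2) * (c.1 - a.1)

/-- A planar point set is in general position if no three distinct points are collinear. -/
def GeneralPosition (S : Set (ℝ × ℝ)) : Prop :=
  ∀ a ∈ S, ∀ b ∈ S, ∀ c ∈ S, a ≠ b → a ≠ c → b ≠ c →
    ¬ Collinear ℝ ({a, b, c} : Set (ℝ × ℝ))

/-- No two points of `S` share an `x`-coordinate. -/
def DistinctX (S : Set (ℝ × ℝ)) : Prop :=
  ∀ a ∈ S, ∀ b ∈ S, a ≠ b → a.1 ≠ b.1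

/-- `p` lies strictly below the (non-vertical) line through `a` and `b`, where `a.1 < b.1`. -/
def StrictlyBelow (p a b : ℝ × ℝ) : Prop :=
  (b.1 - a.1) * (p.2 - a.2) < (b.2 - a.2) * (p.1 - a.1)

/-- `p` lies strictly above the (non-vertical) line through `a` and `b`, where `a.1 < b.1`. -/
def StrictlyAbove (p a b : ℝ × ℝ) : Prop :=
  (b.2 - a.2) * (p.1 - a.1) < (b.1 - a.1) * (p.2 - a.2)

/-- `Y` is high above `X`: every line through two points of `Y` is above every point of `X`. -/
def HighAbove (Y X : Set (ℝ × ℝ)) : Prop :=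
  ∀ a ∈ Y, ∀ b ∈ Y, a.1 < b.1 → ∀ p ∈ X, StrictlyBelow p a b

/-- `X` is deep below `Y`: every line through two points of `X` is below every point of `Y`. -/
def DeepBelow (X Y : Set (ℝ × ℝ)) : Prop :=
  ∀ a ∈ X, ∀ b ∈ X, a.1 < b.1 → ∀ p ∈ Y, StrictlyAbove p a b

/-- The even-indexed points of `H` in increasing order of `x`-coordinate (`H₀`). -/
def evenPart (H : Finset (ℝ × ℝ)) : Finset (ℝ × ℝ) :=
  H.filter fun p => Even (H.filter fun q => q.1 < p.1).card

/-- The odd-indexed points of `H` in increasing order of `x`-coordinate (`H₁`). -/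
def oddPart (H : Finset (ℝ × ℝ)) : Finset (ℝ × ℝ) :=
  H.filter fun p => ¬ Even (H.filter fun q => q.1 < p.1).card

/-- Horton sets. -/
inductive IsHorton : Finset (ℝ × ℝ) → Prop
  | small (H : Finset (ℝ × ℝ)) (hgp : GeneralPosition ↑H) (hx : DistinctX ↑H)
      (hcard : H.card ≤ 2) : IsHorton H
  | split (H : Finset (ℝ × ℝ)) (hgp : GeneralPosition ↑H) (hx : DistinctX ↑H)
      (hcard : 2 < H.card) (h0 : IsHorton (evenPart H)) (h1 : IsHorton (oddPart H))
      (hhigh : HighAbove ↑(oddPart H) ↑(evenPart H))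
      (hdeep : DeepBelow ↑(evenPart H) ↑(oddPart H)) : IsHorton H

/-- `t` is an empty triangle of the point set `S`: a three-element non-collinear subset of `S`
whose open interior contains no point of `S`. -/
def IsEmptyTriangleOf (S : Set (ℝ × ℝ)) (t : Finset (ℝ × ℝ)) : Prop :=
  t.card = 3 ∧ (↑t : Set (ℝ × ℝ)) ⊆ S ∧ ¬ Collinear ℝ (↑t : Set (ℝ × ℝ)) ∧
    ∀ p ∈ S, p ∉ interior (convexHull ℝ (↑t : Set (ℝ × ℝ)))

/-- `τ S`: the number of empty triangles of `S`. -/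
def tau (S : Set (ℝ × ℝ)) : ℕ :=
  {t : Finset (ℝ × ℝ) | IsEmptyTriangleOf S t}.ncard

/-- The number of empty triangles of `S` stabbed by the point `q`. -/
def stabbedCount (S : Set (ℝ × ℝ)) (q : ℝ × ℝ) : ℕ :=
  {t : Finset (ℝ × ℝ) | IsEmptyTriangleOf S t ∧
    q ∈ interior (convexHull ℝ (↑t : Set (ℝ × ℝ)))}.ncard

/-- The number of empty triangles of `S` having `q` as a vertex. -/
def incidentCount (S : Set (ℝ × ℝ)) (q : ℝ × ℝ) : ℕ :=
  {t : Finset (ℝ × ℝ) | IsEmptyTriangleOf S t ∧ q ∈ t}.ncard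

/-- `H_b` for a binary string `b` (first character applied first):
recursively take the odd (`true`) or even (`false`) part. -/
def subPart (H : Finset (ℝ × ℝ)) : List Bool → Finset (ℝ × ℝ)
  | [] => H
  | b :: rest => subPart (if b then oddPart H else evenPart H) rest

/-- `u` and `v` are consecutive points (in `x`-order) of `S`, with `u` to the left of `v`. -/
def ConsecutiveIn (S : Finset (ℝ × ℝ)) (u v : ℝ × ℝ) : Prop :=
  u ∈ S ∧ v ∈ S ∧ u.1 < v.1 ∧ ∀ w ∈ S, ¬ (u.1 < w.1 ∧ w.1 < v.1)

/-- The edge `(u, v)` of `H` (with `u.1 < v.1`, both endpoints in `H₁`) is visible from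
below: every point of `H₁` strictly between them lies strictly above the line `uv`. -/
def VisibleFromBelow (H : Finset (ℝ × ℝ)) (u v : ℝ × ℝ) : Prop :=
  u ∈ oddPart H ∧ v ∈ oddPart H ∧ u.1 < v.1 ∧
    ∀ w ∈ oddPart H, u.1 < w.1 → w.1 < v.1 → StrictlyAbove w u v

/-- The edge `(u, v)` of `H` (with `u.1 < v.1`, both endpoints in `H₀`) is visible from
above: every point of `H₀` strictly between them lies strictly below the line `uv`. -/
def VisibleFromAbove (H : Finset (ℝ × ℝ)) (u v : ℝ × ℝ) : Prop :=
  u ∈ evenPart H ∧ v ∈ evenPart H ∧ u.1 < v.1 ∧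
    ∀ w ∈ evenPart H, u.1 < w.1 → w.1 < v.1 → StrictlyBelow w u v

/-! A point `w` lies inside the triangle `abc` exactly when replacing any one vertex by `w`
preserves the orientation. Let `a, b ∈ H₀` and `c ∈ H₁`, and suppose some `w ∈ H₀` between `a` and
`b` is not below the line `ab`; by general position it is above that line. Since `H₀` is deep below
`H₁`, the lines `aw` and `wb` pass below `c`, so `w` is interior to `abc`, which is then not empty.
The case `a, b ∈ H₁` is the mirror image. -/

section Orientation

variable {a b c p : ℝ × ℝ}

lemma strictlyAbove_iff_orient_pos : StrictlyAbove p a b ↔ 0 < orient a b p :=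
  sub_pos.symm

lemma strictlyBelow_iff_orient_neg : StrictlyBelow p a b ↔ orient a b p < 0 :=
  sub_neg.symm

lemma orient_swap_left (a b c : ℝ × ℝ) : orient b a c = -orient a b c := by
  simp only [orient]
  ring

lemma orient_add_orient_add_orient (a b c p : ℝ × ℝ) :
    orient p b c + orient a p c + orient a b p = orient a b c := by
  simp only [orient]
  ring

/-- The barycentric coordinates of `p` with respect to `abc`, with the denominator cleared. -/
lemma orient_smul_add_orient_smul_add_orient_smul (a b c p : ℝ × ℝ) :
    orient p b c • a + orient a p c • b + orient a b p • c = orient a b c • p := by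
  ext <;> simp only [orient, Prod.fst_add, Prod.snd_add, Prod.smul_fst, Prod.smul_snd,
    smul_eq_mul] <;> ring

lemma collinear_of_orient_eq_zero (h : orient a b c = 0) :
    Collinear ℝ ({a, b, c} : Set (ℝ × ℝ)) := by
  obtain rfl | hne := eq_or_ne a b
  · simpa using collinear_pair ℝ a c
  have hnorm : (b.1 - a.1) ^ 2 + (b.2 - a.2) ^ 2 ≠ 0 := by
    contrapose! hne
    exact Prod.ext (by nlinarith) (by nlinarith)
  -- The coefficient of the orthogonal projection of `c - a` onto `b - a`.
  let r := ((b.1 - a.1) * (c.1 - a.1) + (b.2 - a.2) * (c.2 - a.2)) /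
    ((b.1 - a.1) ^ 2 + (b.2 - a.2) ^ 2)
  have hc : c = r • (b - a) + a := by
    simp only [orient] at h
    ext <;> simp only [r, Prod.fst_add, Prod.snd_add, Prod.smul_fst, Prod.smul_snd, Prod.fst_sub,
      Prod.snd_sub, smul_eq_mul] <;> field_simp
    · linear_combination -(b.2 - a.2) * h
    · linear_combination (b.1 - a.1) * h
  refine (collinear_iff_of_mem (p₀ := a) (by simp)).2 ⟨b - a, ?_⟩
  rintro p (rfl | rfl | rfl)
  · exact ⟨0, by simp⟩
  · exact ⟨1, by simp⟩
  · exact ⟨r, hc⟩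

lemma mem_convexHull_of_orient_nonneg (habc : 0 < orient a b c) (ha : 0 ≤ orient p b c)
    (hb : 0 ≤ orient a p c) (hc : 0 ≤ orient a b p) :
    p ∈ convexHull ℝ ({a, b, c} : Set (ℝ × ℝ)) := by
  let w := ![orient p b c, orient a p c, orient a b p]
  have hsum : ∑ i, w i = orient a b c := by
    simpa [w, Fin.sum_univ_three] using orient_add_orient_add_orient a b c p
  have hp : Finset.univ.centerMass w ![a, b, c] = p := by
    rw [Finset.centerMass, hsum, inv_smul_eq_iff₀ habc.ne']
    simpa [w, Fin.sum_univ_three] using orient_smul_add_orient_smul_add_orient_smul a b c p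
  rw [← hp]
  refine Finset.univ.centerMass_mem_convexHull ?_ (hsum ▸ habc) ?_
  · simp [w, Fin.forall_fin_succ, ha, hb, hc]
  · simp [Fin.forall_fin_succ]

lemma mem_interior_convexHull_of_orient_pos (ha : 0 < orient p b c) (hb : 0 < orient a p c)
    (hc : 0 < orient a b p) : p ∈ interior (convexHull ℝ ({a, b, c} : Set (ℝ × ℝ))) := by
  have hopen : IsOpen {q | 0 < orient q b c ∧ 0 < orient a q c ∧ 0 < orient a b q} := by
    simp only [orient]
    refine (isOpen_lt ?_ ?_).and ((isOpen_lt ?_ ?_).and (isOpen_lt ?_ ?_)) <;> fun_prop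
  refine interior_maximal ?_ hopen ⟨ha, hb, hc⟩
  rintro q ⟨hqa, hqb, hqc⟩
  have habc : 0 < orient a b c := by linarith [orient_add_orient_add_orient a b c q]
  exact mem_convexHull_of_orient_nonneg habc hqa.le hqb.le hqc.le

lemma mem_interior_convexHull_of_orient_neg (ha : orient p b c < 0) (hb : orient a p c < 0)
    (hc : orient a b p < 0) : p ∈ interior (convexHull ℝ ({a, b, c} : Set (ℝ × ℝ))) := by
  rw [Set.insert_comm]
  apply mem_interior_convexHull_of_orient_pos <;> rw [orient_swap_left] <;> linarith

end Orientation

section Visibility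

variable {X Y : Set (ℝ × ℝ)} {a b c p : ℝ × ℝ}

lemma GeneralPosition.mono (hY : GeneralPosition Y) (h : X ⊆ Y) : GeneralPosition X :=
  fun a ha b hb c hc ↦ hY a (h ha) b (h hb) c (h hc)

lemma GeneralPosition.orient_ne_zero (hX : GeneralPosition X) (ha : a ∈ X) (hb : b ∈ X)
    (hc : c ∈ X) (hab : a ≠ b) (hac : a ≠ c) (hbc : b ≠ c) : orient a b c ≠ 0 :=
  fun h ↦ hX a ha b hb c hc hab hac hbc (collinear_of_orient_eq_zero h)

lemma GeneralPosition.orient_ne_zero_of_between (hX : GeneralPosition X) (ha : a ∈ X) (hb : b ∈ X)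
    (hp : p ∈ X) (hap : a.1 < p.1) (hpb : p.1 < b.1) : orient a b p ≠ 0 :=
  hX.orient_ne_zero ha hb hp (ne_of_apply_ne Prod.fst (hap.trans hpb).ne)
    (ne_of_apply_ne Prod.fst hap.ne) (ne_of_apply_ne Prod.fst hpb.ne')

lemma DeepBelow.strictlyBelow_of_forall_notMem_interior (h : DeepBelow X Y)
    (hX : GeneralPosition X) (ha : a ∈ X) (hb : b ∈ X) (hc : c ∈ Y)
    (hempty : ∀ q ∈ X, q ∉ interior (convexHull ℝ ({a, b, c} : Set (ℝ × ℝ))))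
    (hp : p ∈ X) (hap : a.1 < p.1) (hpb : p.1 < b.1) : StrictlyBelow p a b := by
  have hpbc : 0 < orient p b c := strictlyAbove_iff_orient_pos.1 (h p hp b hb hpb c hc)
  have hapc : 0 < orient a p c := strictlyAbove_iff_orient_pos.1 (h a ha p hp hap c hc)
  have hnot : ¬ 0 < orient a b p := fun habp ↦
    hempty p hp (mem_interior_convexHull_of_orient_pos hpbc hapc habp)
  exact strictlyBelow_iff_orient_neg.2
    ((not_lt.1 hnot).lt_of_ne (hX.orient_ne_zero_of_between ha hb hp hap hpb))

lemma HighAbove.strictlyAbove_of_forall_notMem_interior (h : HighAbove Y X)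
    (hY : GeneralPosition Y) (ha : a ∈ Y) (hb : b ∈ Y) (hc : c ∈ X)
    (hempty : ∀ q ∈ Y, q ∉ interior (convexHull ℝ ({a, b, c} : Set (ℝ × ℝ))))
    (hp : p ∈ Y) (hap : a.1 < p.1) (hpb : p.1 < b.1) : StrictlyAbove p a b := by
  have hpbc : orient p b c < 0 := strictlyBelow_iff_orient_neg.1 (h p hp b hb hpb c hc)
  have hapc : orient a p c < 0 := strictlyBelow_iff_orient_neg.1 (h a ha p hp hap c hc)
  have hnot : ¬ orient a b p < 0 := fun habp ↦
    hempty p hp (mem_interior_convexHull_of_orient_neg hpbc hapc habp)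
  exact strictlyAbove_iff_orient_pos.2
    ((not_lt.1 hnot).lt_of_ne' (hY.orient_ne_zero_of_between ha hb hp hap hpb))

end Visibility

namespace IsHorton

variable {H : Finset (ℝ × ℝ)}

lemma generalPosition (hH : IsHorton H) : GeneralPosition ↑H := by
  cases hH <;> assumption

lemma highAbove (hH : IsHorton H) (hcard : 2 < H.card) :
    HighAbove ↑(oddPart H) ↑(evenPart H) := by
  cases hH with
  | small _ _ _ hle => exact absurd hcard hle.not_gt
  | split => assumption

lemma deepBelow (hH : IsHorton H) (hcard : 2 < H.card) :
    DeepBelow ↑(evenPart H) ↑(oddPart H) := by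
  cases hH with
  | small _ _ _ hle => exact absurd hcard hle.not_gt
  | split => assumption

end IsHorton

theorem empty_triangle_edge_visible_general (H : Finset (ℝ × ℝ)) (hgp : GeneralPosition ↑H)
    (hhigh : HighAbove ↑(oddPart H) ↑(evenPart H)) (hdeep : DeepBelow ↑(evenPart H) ↑(oddPart H))
    (a b c : ℝ × ℝ) (hab : a.1 < b.1) (hempty : IsEmptyTriangleOf ↑H {a, b, c}) :
    (a ∈ evenPart H → b ∈ evenPart H → c ∈ oddPart H → VisibleFromAbove H a b) ∧
    (a ∈ oddPart H → b ∈ oddPart H → c ∈ evenPart H → VisibleFromBelow H a b) := by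
  have heven : (evenPart H : Set (ℝ × ℝ)) ⊆ H := Finset.coe_subset.2 (Finset.filter_subset _ _)
  have hodd : (oddPart H : Set (ℝ × ℝ)) ⊆ H := Finset.coe_subset.2 (Finset.filter_subset _ _)
  have hinterior : ∀ q ∈ H, q ∉ interior (convexHull ℝ ({a, b, c} : Set (ℝ × ℝ))) := by
    simpa only [Finset.coe_insert, Finset.coe_singleton, Finset.mem_coe] using hempty.2.2.2
  refine ⟨fun ha hb hc ↦ ⟨ha, hb, hab, fun p hp hap hpb ↦ ?_⟩,
    fun ha hb hc ↦ ⟨ha, hb, hab, fun p hp hap hpb ↦ ?_⟩⟩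
  · exact hdeep.strictlyBelow_of_forall_notMem_interior (hgp.mono heven) ha hb hc
      (fun q hq ↦ hinterior q (heven hq)) hp hap hpb
  · exact hhigh.strictlyAbove_of_forall_notMem_interior (hgp.mono hodd) ha hb hc
      (fun q hq ↦ hinterior q (hodd hq)) hp hap hpb

/-- For an empty triangle of a Horton set `H` with vertices in both `H₀` and `H₁`,
the edge whose endpoints lie in the same half is a visible edge of `H`. -/
theorem empty_triangle_edge_visible (H : Finset (ℝ × ℝ)) (hH : IsHorton H)
    (hcard : 4 ≤ H.card) (a b c : ℝ × ℝ) (ha : a ∈ H) (hb : b ∈ H) (hc : c ∈ H)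
    (hab : a.1 < b.1) (hempty : IsEmptyTriangleOf ↑H {a, b, c}) :
    (a ∈ evenPart H → b ∈ evenPart H → c ∈ oddPart H → VisibleFromAbove H a b) ∧
    (a ∈ oddPart H → b ∈ oddPart H → c ∈ evenPart H → VisibleFromBelow H a b) :=
  empty_triangle_edge_visible_general H hH.generalPosition (hH.highAbove (by lia))
    (hH.deepBelow (by lia)) a b c hab hempty
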